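/- Let (Ω, P) be a probability space and let A, B, C, D be events with P(C ∪ D) > 0, P(C) > 0, P(D) > 0, P(Cᶜ ∩ D) > 0, P(C ∩ Dᶜ) > 0, P(C ∩ D) > 0 and P(Cᶜ) > 0, P(Dᶜ) > 0. Assume that for each of the three conditioning events E ∈ {Cᶜ ∩ D, C ∩ Dᶜ, C ∩ D}, Aᶜ and Bᶜ are conditionally independent given E, i.e. P[Aᶜ ∩ Bᶜ | E] = P[Aᶜ | E] · P[Bᶜ | E]; assume moreover P[Aᶜ | Cᶜ ∩ D] = P[Aᶜ | Cᶜ], P[Bᶜ | Cᶜ ∩ D] = P[Bᶜ | D], P[Aᶜ | C ∩ Dᶜ] = P[Aᶜ | C], P[Bᶜ | C ∩ Dᶜ] = P[Bᶜ | Dᶜ], P[Aᶜ | C ∩ D] = P[Aᶜ | C], and P[Bᶜ | C ∩ D] = P[Bᶜ | D]. If P[Aᶜ | C] ≤ β₁ and P[Bᶜ | D] ≤ β₂ for nonnegative reals β₁, β₂, then P[(A ∪ B)ᶜ | C ∪ D] ≤ β₁ + β₂. -/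

import Mathlib

/-!
A point of `C ∪ D` missed by both mechanisms lies in `Aᶜ ∩ C` or in `Bᶜ ∩ D`, so a union bound
applies. Enlarging the conditioning event from `C` to `C ∪ D` only decreases the probability of
`Aᶜ ∩ C`, since it multiplies it by `P[C | C ∪ D] ≤ 1`.
-/

open MeasureTheory

/-- Conditional probability `P[E|F] = P(E ∩ F)/P(F)` as a real number. -/
noncomputable def condProb {Ω : Type*} [MeasurableSpace Ω] (P : Measure Ω)
    (E F : Set Ω) : ℝ :=
  (P (E ∩ F)).toReal / (P F).toReal

section CondProb

open scoped ENNReal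

variable {Ω : Type*} [MeasurableSpace Ω] {P : Measure Ω}

lemma condProb_nonneg (E F : Set Ω) : 0 ≤ condProb P E F :=
  div_nonneg measureReal_nonneg measureReal_nonneg

lemma condProb_le_one (E : Set Ω) {F : Set Ω} (hF : P F ≠ ∞ := by finiteness) :
    condProb P E F ≤ 1 :=
  div_le_one_of_le₀ (measureReal_mono Set.inter_subset_right hF) measureReal_nonneg

lemma condProb_le_condProb_of_inter_subset {E₁ E₂ F : Set Ω} (h : E₁ ∩ F ⊆ E₂)
    (hF : P F ≠ ∞ := by finiteness) : condProb P E₁ F ≤ condProb P E₂ F :=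
  div_le_div_of_nonneg_right
    (measureReal_mono (Set.subset_inter h Set.inter_subset_right)
      (measure_ne_top_of_subset Set.inter_subset_right hF))
    measureReal_nonneg

lemma condProb_union_le (E₁ E₂ F : Set Ω) :
    condProb P (E₁ ∪ E₂) F ≤ condProb P E₁ F + condProb P E₂ F := by
  unfold condProb
  rw [Set.union_inter_distrib_right, ← add_div]
  exact div_le_div_of_nonneg_right (measureReal_union_le _ _) measureReal_nonneg

lemma condProb_inter_eq_mul_of_subset (E : Set Ω) {F G : Set Ω} (hFG : F ⊆ G)
    (hF₀ : P F ≠ 0) (hF : P F ≠ ∞ := by finiteness) :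
    condProb P (E ∩ F) G = condProb P E F * condProb P F G := by
  have hF_real : (P F).toReal ≠ 0 := ENNReal.toReal_ne_zero.mpr ⟨hF₀, hF⟩
  unfold condProb
  rw [Set.inter_assoc, Set.inter_eq_left.mpr hFG, div_mul_div_cancel₀ hF_real]

lemma condProb_inter_le_condProb_of_subset (E : Set Ω) {F G : Set Ω} (hFG : F ⊆ G)
    (hF₀ : P F ≠ 0) (hG : P G ≠ ∞ := by finiteness) :
    condProb P (E ∩ F) G ≤ condProb P E F := by
  rw [condProb_inter_eq_mul_of_subset E hFG hF₀ (measure_ne_top_of_subset hFG hG)]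
  exact mul_le_of_le_one_right (condProb_nonneg E F) (condProb_le_one F hG)

lemma condProb_inter_union_le_add (E₁ E₂ : Set Ω) {F₁ F₂ : Set Ω} (hF₁₀ : P F₁ ≠ 0)
    (hF₂₀ : P F₂ ≠ 0) (hF₁ : P F₁ ≠ ∞ := by finiteness) (hF₂ : P F₂ ≠ ∞ := by finiteness) :
    condProb P (E₁ ∩ E₂) (F₁ ∪ F₂) ≤ condProb P E₁ F₁ + condProb P E₂ F₂ := by
  have hcover : (E₁ ∩ E₂) ∩ (F₁ ∪ F₂) ⊆ (E₁ ∩ F₁) ∪ (E₂ ∩ F₂) := by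
    rintro x ⟨⟨hxE₁, hxE₂⟩, hxF₁ | hxF₂⟩
    exacts [Or.inl ⟨hxE₁, hxF₁⟩, Or.inr ⟨hxE₂, hxF₂⟩]
  calc condProb P (E₁ ∩ E₂) (F₁ ∪ F₂)
      ≤ condProb P ((E₁ ∩ F₁) ∪ (E₂ ∩ F₂)) (F₁ ∪ F₂) :=
        condProb_le_condProb_of_inter_subset hcover
    _ ≤ condProb P (E₁ ∩ F₁) (F₁ ∪ F₂) + condProb P (E₂ ∩ F₂) (F₁ ∪ F₂) :=
        condProb_union_le _ _ _
    _ ≤ condProb P E₁ F₁ + condProb P E₂ F₂ :=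
        add_le_add (condProb_inter_le_condProb_of_subset E₁ Set.subset_union_left hF₁₀)
          (condProb_inter_le_condProb_of_subset E₂ Set.subset_union_right hF₂₀)

theorem disj_fnr_bound_general (A B : Set Ω) {C D : Set Ω} (hC₀ : P C ≠ 0) (hD₀ : P D ≠ 0)
    {β₁ β₂ : ℝ} (hβ₁ : condProb P Aᶜ C ≤ β₁) (hβ₂ : condProb P Bᶜ D ≤ β₂)
    (hC : P C ≠ ∞ := by finiteness) (hD : P D ≠ ∞ := by finiteness) :
    condProb P (A ∪ B)ᶜ (C ∪ D) ≤ β₁ + β₂ := by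
  rw [Set.compl_union]
  exact (condProb_inter_union_le_add Aᶜ Bᶜ hC₀ hD₀).trans (add_le_add hβ₁ hβ₂)

end CondProb

/-- β-bound on the FNR of a 2-query disjunction mechanism:
if `P[Aᶜ|C] ≤ β₁` and `P[Bᶜ|D] ≤ β₂`, then `P[(A ∪ B)ᶜ | C ∪ D] ≤ β₁ + β₂`. -/
theorem disj_fnr_bound {Ω : Type*} [MeasurableSpace Ω] (P : Measure Ω)
    [IsProbabilityMeasure P] (A B C D : Set Ω)
    (hA : MeasurableSet A) (hB : MeasurableSet B)
    (hC : MeasurableSet C) (hD : MeasurableSet D)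
    (hCuD : 0 < P (C ∪ D)) (hC0 : 0 < P C) (hD0 : 0 < P D)
    (hCcD : 0 < P (Cᶜ ∩ D)) (hCDc : 0 < P (C ∩ Dᶜ)) (hCD : 0 < P (C ∩ D))
    (hCc : 0 < P Cᶜ) (hDc : 0 < P Dᶜ)
    (hindep1 : condProb P (Aᶜ ∩ Bᶜ) (Cᶜ ∩ D) =
      condProb P Aᶜ (Cᶜ ∩ D) * condProb P Bᶜ (Cᶜ ∩ D))
    (hindep2 : condProb P (Aᶜ ∩ Bᶜ) (C ∩ Dᶜ) =
      condProb P Aᶜ (C ∩ Dᶜ) * condProb P Bᶜ (C ∩ Dᶜ))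
    (hindep3 : condProb P (Aᶜ ∩ Bᶜ) (C ∩ D) =
      condProb P Aᶜ (C ∩ D) * condProb P Bᶜ (C ∩ D))
    (h1 : condProb P Aᶜ (Cᶜ ∩ D) = condProb P Aᶜ Cᶜ)
    (h2 : condProb P Bᶜ (Cᶜ ∩ D) = condProb P Bᶜ D)
    (h3 : condProb P Aᶜ (C ∩ Dᶜ) = condProb P Aᶜ C)
    (h4 : condProb P Bᶜ (C ∩ Dᶜ) = condProb P Bᶜ Dᶜ)
    (h5 : condProb P Aᶜ (C ∩ D) = condProb P Aᶜ C)
    (h6 : condProb P Bᶜ (C ∩ D) = condProb P Bᶜ D)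
    (β₁ β₂ : ℝ) (hβ₁ : 0 ≤ β₁) (hβ₂ : 0 ≤ β₂)
    (hb1 : condProb P Aᶜ C ≤ β₁) (hb2 : condProb P Bᶜ D ≤ β₂) :
    condProb P (A ∪ B)ᶜ (C ∪ D) ≤ β₁ + β₂ :=
  disj_fnr_bound_general A B hC0.ne' hD0.ne' hb1 hb2
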